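/- Consider the homogeneous-stubbornness perception dynamics p(s+1) = a W(p(s))^⊤ p(s) + ((1 − a)/n) 𝟙_n with a ∈ (0,1). If C is doubly stochastic (all row sums and all column sums equal 1), then every trajectory starting from p(0) ∈ Γ_n(0, 𝟙_n/2) converges exponentially (there exist c > 0 and λ ∈ (0,1) with ‖p(s) − 𝟙_n/n‖ ≤ c λ^s for all s) to the democratic allocation 𝟙_n/n. -/

import Mathlib

/-!
In coordinates the map is `p_j ↦ a (p_j² + ∑ i, C i j (1 - p_i) p_i) + (1 - a)/n`. On `[0, 1/2]` both
`x ↦ x²` and `x ↦ (1 - x) x` are increasing, and they add up to `x`. As the columns of `C` sum to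
one, bounds `m ≤ p_i ≤ M` inside `[0, 1/2]` therefore give
`a m + (1 - a)/n ≤ q_j ≤ a M + (1 - a)/n` for the image `q` of `p`. With `m = 0`, `M = 1/2` this shows
that the box is invariant; with `m`, `M` the truncations of `1/n ∓ r` to the box it shows that the
sup-norm distance to `1/n` shrinks by the factor `a` at each step.
-/

open Matrix Finset

/-- `W(x) = diag(x) + (I - diag(x)) C`. -/
noncomputable def Wmat (n : ℕ) (C : Matrix (Fin n) (Fin n) ℝ) (x : Fin n → ℝ) :
    Matrix (Fin n) (Fin n) ℝ :=
  Matrix.diagonal x + (1 - Matrix.diagonal x) * C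

/-- The homogeneous-stubbornness perception dynamics map
`p ↦ a W(p)ᵀ p + ((1 - a)/n) 𝟙`. -/
noncomputable def homoMap (n : ℕ) (C : Matrix (Fin n) (Fin n) ℝ) (a : ℝ)
    (p : Fin n → ℝ) : Fin n → ℝ :=
  a • ((Wmat n C p)ᵀ *ᵥ p) + ((1 - a) / (n : ℝ)) • (fun _ => (1 : ℝ))

/-- The `n`-simplex `Δ_n`. -/
def simplex (n : ℕ) : Set (Fin n → ℝ) := {x | (∀ i, 0 ≤ x i) ∧ ∑ i, x i = 1}

/-- The box `Γ_n(y, z) = {x : y ≤ x ≤ z}`. -/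
def box (n : ℕ) (y z : Fin n → ℝ) : Set (Fin n → ℝ) := {x | ∀ i, y i ≤ x i ∧ x i ≤ z i}

lemma homoMap_apply (n : ℕ) (C : Matrix (Fin n) (Fin n) ℝ) (a : ℝ) (p : Fin n → ℝ) (j : Fin n) :
    homoMap n C a p j = a * (p j ^ 2 + ∑ i, C i j * ((1 - p i) * p i)) + (1 - a) / n := by
  have h : ∀ i, ((1 - Matrix.diagonal p) * C) i j = (1 - p i) * C i j := by
    intro i
    rw [sub_mul, one_mul, Matrix.sub_apply, Matrix.diagonal_mul]
    ring
  simp only [homoMap, Wmat, Pi.add_apply, Pi.smul_apply, smul_eq_mul, mul_one, Matrix.mulVec,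
    dotProduct, Matrix.transpose_apply, Matrix.add_apply, h, add_mul, Finset.sum_add_distrib]
  have h1 : ∑ i, Matrix.diagonal p i j * p i = p j ^ 2 := by
    simp [Matrix.diagonal_apply, sq]
  rw [h1]
  congr 3
  exact Finset.sum_congr rfl fun i _ => by ring

lemma homoMap_le (n : ℕ) (C : Matrix (Fin n) (Fin n) ℝ) (hC0 : ∀ i j, 0 ≤ C i j)
    (hCcol : ∀ j, ∑ i, C i j = 1) (a : ℝ) (ha : 0 ≤ a) (p : Fin n → ℝ) (M : ℝ)
    (hM : M ≤ 1 / 2) (h0 : ∀ i, 0 ≤ p i) (hp : ∀ i, p i ≤ M) (j : Fin n) :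
    homoMap n C a p j ≤ a * M + (1 - a) / n := by
  have h1 : ∑ i, C i j * ((1 - p i) * p i) ≤ ∑ i, C i j * ((1 - M) * M) :=
    Finset.sum_le_sum fun i _ => mul_le_mul_of_nonneg_left
      (by nlinarith [hp i, mul_nonneg (sub_nonneg.2 (hp i)) (by linarith [hp i] : 0 ≤ 1 - M - p i)])
      (hC0 i j)
  rw [← Finset.sum_mul, hCcol, one_mul] at h1
  have h2 : p j ^ 2 ≤ M ^ 2 := pow_le_pow_left₀ (h0 j) (hp j) 2
  rw [homoMap_apply]
  gcongr
  nlinarith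

lemma le_homoMap (n : ℕ) (C : Matrix (Fin n) (Fin n) ℝ) (hC0 : ∀ i j, 0 ≤ C i j)
    (hCcol : ∀ j, ∑ i, C i j = 1) (a : ℝ) (ha : 0 ≤ a) (p : Fin n → ℝ) (m : ℝ)
    (hm : 0 ≤ m) (h2 : ∀ i, p i ≤ 1 / 2) (hp : ∀ i, m ≤ p i) (j : Fin n) :
    a * m + (1 - a) / n ≤ homoMap n C a p j := by
  have h1 : ∑ i, C i j * ((1 - m) * m) ≤ ∑ i, C i j * ((1 - p i) * p i) :=
    Finset.sum_le_sum fun i _ => mul_le_mul_of_nonneg_left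
      (by nlinarith [mul_nonneg (sub_nonneg.2 (hp i)) (by linarith [hp i, h2 i] : 0 ≤ 1 - m - p i)])
      (hC0 i j)
  rw [← Finset.sum_mul, hCcol, one_mul] at h1
  have h3 : m ^ 2 ≤ p j ^ 2 := pow_le_pow_left₀ hm (hp j) 2
  rw [homoMap_apply]
  gcongr
  nlinarith

/-- Theorem 5(iii): for the homogeneous-stubbornness dynamics with
doubly stochastic `C`, every trajectory starting in `Γ_n(0, 𝟙/2)` converges
exponentially to the democratic allocation `𝟙/n`. -/
theorem homogeneous_doubly_stochastic_convergence_to_democracy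
    (n : ℕ) (hn : 2 ≤ n)
    (C : Matrix (Fin n) (Fin n) ℝ)
    (hC0 : ∀ i j, 0 ≤ C i j) (hCrow : ∀ i, ∑ j, C i j = 1) (hCdiag : ∀ i, C i i = 0)
    (hCcol : ∀ j, ∑ i, C i j = 1)
    (a : ℝ) (ha : a ∈ Set.Ioo (0 : ℝ) 1)
    (p : ℕ → Fin n → ℝ) (hp : ∀ s, p (s + 1) = homoMap n C a (p s))
    (hp0 : p 0 ∈ box n 0 (fun _ => 1 / 2)) :
    ∃ c > 0, ∃ lam ∈ Set.Ioo (0 : ℝ) 1, ∀ s : ℕ,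
      ‖p s - fun _ => 1 / (n : ℝ)‖ ≤ c * lam ^ s := by
  obtain ⟨ha0, ha1⟩ := ha
  have hn2 : (2 : ℝ) ≤ n := by exact_mod_cast hn
  have hinv : 1 / (n : ℝ) ≤ 1 / 2 := one_div_le_one_div_of_le two_pos hn2
  have hinv0 : 0 ≤ 1 / (n : ℝ) := by positivity
  have hdiv : (1 - a) / (n : ℝ) = 1 / n - a * (1 / n) := by ring
  have key : ∀ s i, (0 ≤ p s i ∧ p s i ≤ 1 / 2) ∧ |p s i - 1 / n| ≤ 1 * a ^ s := by
    intro s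
    induction s with
    | zero =>
      intro i
      have h0 : 0 ≤ p 0 i := (hp0 i).1
      have h2 : p 0 i ≤ 1 / 2 := (hp0 i).2
      refine ⟨⟨h0, h2⟩, ?_⟩
      rw [pow_zero, abs_le]
      constructor <;> linarith
    | succ s ih =>
      intro j
      have hr : 0 ≤ a ^ s := by positivity
      have hU := homoMap_le n C hC0 hCcol a ha0.le (p s) (min (1 / n + a ^ s) (1 / 2))
        (min_le_right _ _) (fun i => (ih i).1.1)
        (fun i => le_min (by linarith [(abs_le.1 (ih i).2).2]) (ih i).1.2) j
      have hL := le_homoMap n C hC0 hCcol a ha0.le (p s) (max (1 / n - a ^ s) 0)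
        (le_max_right _ _) (fun i => (ih i).1.2)
        (fun i => max_le (by linarith [(abs_le.1 (ih i).2).1]) (ih i).1.1) j
      rw [hdiv] at hU hL
      have u1 := mul_le_mul_of_nonneg_left (min_le_left (1 / (n : ℝ) + a ^ s) (1 / 2)) ha0.le
      have u2 := mul_le_mul_of_nonneg_left (min_le_right (1 / (n : ℝ) + a ^ s) (1 / 2)) ha0.le
      have l1 := mul_le_mul_of_nonneg_left (le_max_left (1 / (n : ℝ) - a ^ s) 0) ha0.le
      have l2 := mul_le_mul_of_nonneg_left (le_max_right (1 / (n : ℝ) - a ^ s) 0) ha0.le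
      have hps : p (s + 1) j = homoMap n C a (p s) j := by rw [hp]
      have e : a ^ (s + 1) = a * a ^ s := pow_succ' a s
      rw [hps, e, abs_le]
      refine ⟨⟨?_, ?_⟩, ?_, ?_⟩ <;>
        nlinarith [mul_nonneg (sub_nonneg.2 ha1.le) hinv0,
          mul_le_mul_of_nonneg_left hinv (sub_nonneg.2 ha1.le)]
  refine ⟨1, one_pos, a, ⟨ha0, ha1⟩, fun s => ?_⟩
  rw [pi_norm_le_iff_of_nonneg (by positivity)]
  intro i
  rw [Pi.sub_apply, Real.norm_eq_abs]
  exact (key s i).2
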